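/- Let n be a positive integer. The following are equivalent: (1) there exists an n-tuple λ of positive integers such that μ_norm(Δ(λ)) = n − 1 (i.e. there exists a maximally non-normal rectangular n-simplex); (2) the set of n-tuples λ of positive integers with μ_norm(Δ(λ)) = n − 1 is infinite. -/

import Mathlib

/-- A point of `ℝⁿ` is a lattice point if all its coordinates are integers. -/
def IsLatticePoint {n : ℕ} (x : Fin n → ℝ) : Prop := ∀ i, ∃ z : ℤ, x i = (z : ℝ)

/-- The `k`-th dilation `kS = {k • x : x ∈ S}` of a set `S ⊆ ℝⁿ`. -/
def dilate {n : ℕ} (k : ℕ) (P : Set (Fin n → ℝ)) : Set (Fin n → ℝ) :=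
  (fun x => (k : ℝ) • x) '' P

/-- Every lattice point of `kP` is a sum of `k` lattice points of `P`. -/
def IsIDP {n : ℕ} (k : ℕ) (P : Set (Fin n → ℝ)) : Prop :=
  ∀ x ∈ dilate k P, IsLatticePoint x →
    ∃ f : Fin k → (Fin n → ℝ), (∀ i, f i ∈ P ∧ IsLatticePoint (f i)) ∧ x = ∑ i, f i

/-- A polytope is normal if for every `k ≥ 1` every lattice point of `kP`
is a sum of `k` lattice points of `P`. -/
def IsNormal {n : ℕ} (P : Set (Fin n → ℝ)) : Prop := ∀ k : ℕ, 1 ≤ k → IsIDP k P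

/-- A polytope is very ample if there is `k₀` such that for every `k ≥ k₀` every
lattice point of `kP` is a sum of `k` lattice points of `P`. -/
def IsVeryAmple {n : ℕ} (P : Set (Fin n → ℝ)) : Prop :=
  ∃ k₀ : ℕ, ∀ k : ℕ, k₀ ≤ k → IsIDP k P

/-- The rectangular simplex `Δ(λ) = conv{0, λ₁e₁, …, λₙeₙ}`. -/
def rectSimplex {n : ℕ} (lam : Fin n → ℕ) : Set (Fin n → ℝ) :=
  convexHull ℝ (insert 0 (Set.range fun i => Pi.single i ((lam i : ℝ))))

/-- An edge of `P`: a segment between two distinct extreme points of `P`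
which is an extreme subset of `P`. -/
def IsEdge {n : ℕ} (P : Set (Fin n → ℝ)) (v w : Fin n → ℝ) : Prop :=
  v ≠ w ∧ v ∈ P.extremePoints ℝ ∧ w ∈ P.extremePoints ℝ ∧
    IsExtreme ℝ P (segment ℝ v w)

/-- `P` has at least `k` lattice points on every edge. -/
def LPE {n : ℕ} (k : ℕ) (P : Set (Fin n → ℝ)) : Prop :=
  ∀ v w, IsEdge P v w →
    ∃ S : Finset (Fin n → ℝ), k ≤ S.card ∧ ∀ x ∈ S, x ∈ segment ℝ v w ∧ IsLatticePoint x

/-- The normality index: the least `k₀` such that `kP` is normal for all `k ≥ k₀`. -/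
noncomputable def munorm {n : ℕ} (P : Set (Fin n → ℝ)) : ℕ :=
  sInf {k₀ : ℕ | ∀ k : ℕ, k₀ ≤ k → IsNormal (dilate k P)}

/-- Almost 1-normality: with `L = lcm λᵢ`, `Lᵢ = L/λᵢ`, `d = gcd Lᵢ`, the number
`L - d` lies in the additive submonoid of `ℕ` generated by the `Lᵢ`. -/
def IsA1N {n : ℕ} (lam : Fin n → ℕ) : Prop :=
  Finset.univ.lcm lam - Finset.univ.gcd (fun i => Finset.univ.lcm lam / lam i) ∈
    AddSubmonoid.closure (Set.range fun i => Finset.univ.lcm lam / lam i)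

/-!
The facet `x_j = 0` of `Δ(λ)` is the rectangular simplex of the remaining entries of `λ`. Call
`w y` the weight of a lattice point `y` of its cone, the least `t` with `y` in the `t`-th dilation.
Over such a `y`, the fibre of `cΔ(λ)` in direction `e_j` has length `λ_j (c - w y)`, and since
lattice points can be lowered along `e_j`, only the topmost lattice point of each fibre has to be
decomposed. The fibres over the summands of `y` have lengths adding up to that of the fibre over
`y`, so comparing their integer parts amounts to comparing the fractional parts of `-λ_j w`. These
depend on `λ_j` only through its residues modulo the other entries, so raising `λ_j` by multiples of
the product of the other entries leaves the normality of all dilations unchanged.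
-/

open Finset

section Preliminaries

variable {ι : Type*} [Fintype ι]

theorem exists_le_sum_eq (f : ι → ℕ) {m : ℕ} (hm : m ≤ ∑ i, f i) : ∃ g ≤ f, ∑ i, g i = m := by
  obtain ⟨g, hgf, hg⟩ := Finsupp.exists_le_degree_eq (Finsupp.equivFunOnFinite.symm f) m
    (by simpa [Finsupp.degree_eq_sum] using hm)
  exact ⟨g, hgf, by rw [← hg, Finsupp.degree_eq_sum]⟩

theorem floor_sum_le_sum_floor_iff {R : Type*} [Ring R] [LinearOrder R] [IsStrictOrderedRing R]
    [FloorRing R] {f : ι → R} (hf : ∀ i, 0 ≤ f i) :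
    ⌊∑ i, f i⌋₊ ≤ ∑ i, ⌊f i⌋₊ ↔ ∑ i, Int.fract (f i) ≤ Int.fract (∑ i, f i) := by
  rw [← Nat.cast_le (α := R), Nat.cast_sum,
    natCast_floor_eq_intCast_floor (sum_nonneg fun i _ ↦ hf i),
    sum_congr rfl fun i _ ↦ natCast_floor_eq_intCast_floor (hf i)]
  simp only [← Int.self_sub_floor, sum_sub_distrib]
  exact (sub_le_sub_iff_left _).symm

theorem sum_smul_mem_convexHull_insert_zero {K E : Type*} [Field K] [LinearOrder K]
    [IsStrictOrderedRing K] [AddCommGroup E] [Module K E] (v : ι → E) {w : ι → K}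
    (hw : ∀ i, 0 ≤ w i) (hw' : ∑ i, w i ≤ 1) :
    ∑ i, w i • v i ∈ convexHull K (insert 0 (Set.range v)) := by
  refine mem_convexHull_of_exists_fintype (ι := Option ι)
    (fun o ↦ o.elim (1 - ∑ i, w i) w) (fun o ↦ o.elim 0 v) ?_ ?_ ?_ ?_
  · rintro (_ | i)
    exacts [sub_nonneg.2 hw', hw i]
  · simp [Fintype.sum_option]
  · rintro (_ | i)
    exacts [Set.mem_insert _ _, Set.mem_insert_of_mem _ (Set.mem_range_self i)]
  · simp [Fintype.sum_option]

end Preliminaries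

variable {n : ℕ}

theorem IsLatticePoint.exists_natCast {x : Fin n → ℝ} (hx : IsLatticePoint x)
    (hx₀ : ∀ i, 0 ≤ x i) : ∃ y : Fin n → ℕ, x = fun i ↦ (y i : ℝ) := by
  choose z hz using hx
  have hz₀ (i) : 0 ≤ z i := by exact_mod_cast hz i ▸ hx₀ i
  refine ⟨fun i ↦ (z i).toNat, funext fun i ↦ ?_⟩
  rw [hz i]
  exact_mod_cast (Int.toNat_of_nonneg (hz₀ i)).symm

theorem isLatticePoint_natCast (y : Fin n → ℕ) : IsLatticePoint fun i ↦ (y i : ℝ) :=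
  fun i ↦ ⟨y i, by simp⟩

theorem mem_rectSimplex_iff {lam : Fin n → ℕ} (hlam : ∀ i, 0 < lam i) {x : Fin n → ℝ} :
    x ∈ rectSimplex lam ↔ (∀ i, 0 ≤ x i) ∧ ∑ i, x i / lam i ≤ 1 := by
  have hlam' (i) : (lam i : ℝ) ≠ 0 := by exact_mod_cast (hlam i).ne'
  constructor
  · have hlinear : IsLinearMap ℝ fun x : Fin n → ℝ ↦ ∑ i, x i / lam i :=
      ⟨fun x y ↦ by simp [add_div, sum_add_distrib], fun c x ↦ by simp [mul_div_assoc, mul_sum]⟩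
    have hconvex := (convex_Ici (𝕜 := ℝ) (0 : Fin n → ℝ)).inter (convex_halfSpace_le hlinear 1)
    refine fun hx ↦ convexHull_min ?_ hconvex hx
    rintro _ (rfl | ⟨j, rfl⟩)
    · simp
    · exact ⟨Pi.single_nonneg.2 (Nat.cast_nonneg _), by simp [Pi.single_apply, ite_div, hlam']⟩
  · rintro ⟨hx₀, hx₁⟩
    have hx : x = ∑ i, (x i / lam i) • Pi.single i (lam i : ℝ) := by
      ext k
      simp [Finset.sum_apply, Pi.single_apply, hlam']
    rw [hx]
    exact sum_smul_mem_convexHull_insert_zero _ (fun i ↦ div_nonneg (hx₀ i) (Nat.cast_nonneg _)) hx₁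

theorem dilate_rectSimplex (k : ℕ) (lam : Fin n → ℕ) :
    dilate k (rectSimplex lam) = rectSimplex (k • lam) := by
  calc dilate k (rectSimplex lam)
      = convexHull ℝ ((fun x ↦ (k : ℝ) • x) ''
          insert 0 (Set.range fun i ↦ Pi.single i (lam i : ℝ))) :=
        (convexHull_smul (k : ℝ) _).symm
    _ = rectSimplex (k • lam) := by
        rw [Set.image_insert_eq, smul_zero, ← Set.range_comp]
        simp [rectSimplex, Function.comp_def, ← Pi.single_smul]

theorem mem_dilate_rectSimplex_iff {lam : Fin n → ℕ} (hlam : ∀ i, 0 < lam i) {k : ℕ} (hk : 0 < k)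
    {x : Fin n → ℝ} :
    x ∈ dilate k (rectSimplex lam) ↔ (∀ i, 0 ≤ x i) ∧ ∑ i, x i / lam i ≤ k := by
  have hsum : ∑ i, x i / ((k • lam) i : ℕ) = (∑ i, x i / lam i) / k := by
    simp [sum_div, div_div, mul_comm]
  rw [dilate_rectSimplex, mem_rectSimplex_iff (lam := k • lam) fun i ↦ Nat.mul_pos hk (hlam i),
    hsum, div_le_one (by exact_mod_cast hk)]

/-- The weight `∑ xᵢ/λᵢ` of a lattice point `x` of the positive orthant: when all `λᵢ` are
positive, the least real `t ≥ 0` such that `x` lies in the `t`-th dilation of `Δ(λ)`. -/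
noncomputable def latticeWeight (lam x : Fin n → ℕ) : ℝ := ∑ i, (x i : ℝ) / lam i

theorem latticeWeight_sum {ι : Type*} (s : Finset ι) (lam : Fin n → ℕ) (f : ι → Fin n → ℕ) :
    latticeWeight lam (∑ t ∈ s, f t) = ∑ t ∈ s, latticeWeight lam (f t) := by
  simp only [latticeWeight, Finset.sum_apply, Nat.cast_sum, sum_div]
  exact sum_comm

theorem natCast_mem_dilate_rectSimplex_iff {lam : Fin n → ℕ} (hlam : ∀ i, 0 < lam i) {k : ℕ}
    (hk : 0 < k) {x : Fin n → ℕ} :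
    (fun i ↦ (x i : ℝ)) ∈ dilate k (rectSimplex lam) ↔ latticeWeight lam x ≤ k := by
  simp [mem_dilate_rectSimplex_iff hlam hk, latticeWeight]

theorem natCast_mem_rectSimplex_iff {lam : Fin n → ℕ} (hlam : ∀ i, 0 < lam i) {x : Fin n → ℕ} :
    (fun i ↦ (x i : ℝ)) ∈ rectSimplex lam ↔ latticeWeight lam x ≤ 1 := by
  simp [mem_rectSimplex_iff hlam, latticeWeight]

theorem isIDP_rectSimplex_iff {lam : Fin n → ℕ} (hlam : ∀ i, 0 < lam i) {c : ℕ} (hc : 0 < c) :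
    IsIDP c (rectSimplex lam) ↔ ∀ x : Fin n → ℕ, latticeWeight lam x ≤ c →
      ∃ f : Fin c → Fin n → ℕ, (∀ t, latticeWeight lam (f t) ≤ 1) ∧ ∑ t, f t = x := by
  constructor
  · intro h x hx
    obtain ⟨f, hf, hfx⟩ :=
      h _ ((natCast_mem_dilate_rectSimplex_iff hlam hc).2 hx) (isLatticePoint_natCast x)
    choose g hg using fun t ↦
      (hf t).2.exists_natCast fun i ↦ ((mem_rectSimplex_iff hlam).1 (hf t).1).1 i
    refine ⟨g, fun t ↦ (natCast_mem_rectSimplex_iff hlam).1 (hg t ▸ (hf t).1), ?_⟩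
    ext i
    have hfxi := congrFun hfx i
    simp only [hg, Finset.sum_apply] at hfxi ⊢
    exact_mod_cast hfxi.symm
  · intro h x hx hx_lattice
    obtain ⟨y, rfl⟩ := hx_lattice.exists_natCast ((mem_dilate_rectSimplex_iff hlam hc).1 hx).1
    obtain ⟨f, hf, hfy⟩ := h y ((natCast_mem_dilate_rectSimplex_iff hlam hc).1 hx)
    refine ⟨fun t i ↦ f t i, fun t ↦
      ⟨(natCast_mem_rectSimplex_iff hlam).2 (hf t), isLatticePoint_natCast (f t)⟩, ?_⟩
    ext i
    simp [← hfy]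

theorem latticeWeight_le_iff {lam : Fin (n + 1) → ℕ} {j : Fin (n + 1)} (hj : 0 < lam j)
    {x : Fin (n + 1) → ℕ} {C : ℝ} :
    latticeWeight lam x ≤ C ↔ latticeWeight (j.removeNth lam) (j.removeNth x) ≤ C ∧
      x j ≤ ⌊lam j * (C - latticeWeight (j.removeNth lam) (j.removeNth x))⌋₊ := by
  have hj' : (0 : ℝ) < lam j := by exact_mod_cast hj
  have hsplit : latticeWeight lam x =
      x j / lam j + latticeWeight (j.removeNth lam) (j.removeNth x) :=
    Fin.sum_univ_succAbove _ j
  rw [hsplit, ← le_sub_iff_add_le, div_le_iff₀' hj', ← sub_nonneg (a := C)]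
  constructor
  · intro h
    exact ⟨nonneg_of_mul_nonneg_right (h.trans' (Nat.cast_nonneg _)) hj', Nat.le_floor h⟩
  · rintro ⟨hC, h⟩
    exact (Nat.le_floor_iff (mul_nonneg hj'.le hC)).1 h

theorem isIDP_rectSimplex_iff_floor {lam : Fin (n + 1) → ℕ} (hlam : ∀ i, 0 < lam i) {c : ℕ}
    (hc : 0 < c) (j : Fin (n + 1)) :
    IsIDP c (rectSimplex lam) ↔ ∀ y : Fin n → ℕ, latticeWeight (j.removeNth lam) y ≤ c →
      ∃ g : Fin c → Fin n → ℕ, (∀ t, latticeWeight (j.removeNth lam) (g t) ≤ 1) ∧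
        ∑ t, g t = y ∧ ⌊lam j * (c - latticeWeight (j.removeNth lam) y)⌋₊ ≤
          ∑ t, ⌊lam j * (1 - latticeWeight (j.removeNth lam) (g t))⌋₊ := by
  rw [isIDP_rectSimplex_iff hlam hc]
  constructor
  · intro h y hy
    obtain ⟨f, hf, hfy⟩ := h
      (j.insertNth ⌊lam j * (c - latticeWeight (j.removeNth lam) y)⌋₊ y)
      ((latticeWeight_le_iff (hlam j)).2 (by simpa using hy))
    have hf' t := (latticeWeight_le_iff (hlam j)).1 (hf t)
    refine ⟨fun t ↦ j.removeNth (f t), fun t ↦ (hf' t).1, ?_, ?_⟩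
    · ext i
      simpa [Fin.removeNth_apply] using congrFun hfy (j.succAbove i)
    · calc _ = ∑ t, f t j := by simpa using (congrFun hfy j).symm
        _ ≤ _ := sum_le_sum fun t _ ↦ (hf' t).2
  · intro h x hx
    obtain ⟨hx_weight, hx_height⟩ := (latticeWeight_le_iff (hlam j)).1 hx
    obtain ⟨g, hg, hgx, hfloor⟩ := h (j.removeNth x) hx_weight
    obtain ⟨height, height_le, sum_height⟩ := exists_le_sum_eq _ (hx_height.trans hfloor)
    refine ⟨fun t ↦ j.insertNth (height t) (g t), fun t ↦
      (latticeWeight_le_iff (hlam j)).2 (by simpa using ⟨hg t, height_le t⟩), ?_⟩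
    ext i
    cases i using j.succAboveCases with
    | x => simpa using sum_height
    | p i => simpa [Fin.removeNth_apply] using congrFun hgx i

theorem isIDP_rectSimplex_iff_fract {lam : Fin (n + 1) → ℕ} (hlam : ∀ i, 0 < lam i) {c : ℕ}
    (hc : 0 < c) (j : Fin (n + 1)) :
    IsIDP c (rectSimplex lam) ↔ ∀ y : Fin n → ℕ, latticeWeight (j.removeNth lam) y ≤ c →
      ∃ g : Fin c → Fin n → ℕ, (∀ t, latticeWeight (j.removeNth lam) (g t) ≤ 1) ∧
        ∑ t, g t = y ∧ ∑ t, Int.fract (-(lam j * latticeWeight (j.removeNth lam) (g t))) ≤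
          Int.fract (-(lam j * latticeWeight (j.removeNth lam) y)) := by
  rw [isIDP_rectSimplex_iff_floor hlam hc j]
  refine forall₂_congr fun y _ ↦ exists_congr fun g ↦ and_congr_right fun hg ↦
    and_congr_right fun hgy ↦ ?_
  have fract_length (m : ℕ) (w : ℝ) :
      Int.fract (lam j * (m - w)) = Int.fract (-(lam j * w)) := by
    rw [mul_sub, sub_eq_add_neg, ← Nat.cast_mul, Int.fract_natCast_add]
  have length_sum : ∑ t, lam j * (1 - latticeWeight (j.removeNth lam) (g t)) =
      lam j * (c - latticeWeight (j.removeNth lam) y) := by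
    simp [← mul_sum, ← hgy, latticeWeight_sum]
  have length_nonneg (t) : 0 ≤ lam j * (1 - latticeWeight (j.removeNth lam) (g t)) :=
    mul_nonneg (Nat.cast_nonneg _) (sub_nonneg.2 (hg t))
  rw [← length_sum, floor_sum_le_sum_floor_iff length_nonneg, length_sum, fract_length]
  simp only [← Nat.cast_one (R := ℝ), fract_length]

theorem fract_neg_mul_latticeWeight_congr {lam : Fin n → ℕ} {a b : ℕ}
    (hab : ∀ i, a ≡ b [MOD lam i]) (y : Fin n → ℕ) :
    Int.fract (-(a * latticeWeight lam y)) = Int.fract (-(b * latticeWeight lam y)) := by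
  refine Int.fract_eq_fract.2 ⟨∑ i, ((b : ℤ) - a) / lam i * y i, ?_⟩
  have hterm (i) : ((((b : ℤ) - a) / lam i : ℤ) : ℝ) = ((b : ℝ) - a) / lam i := by
    rw [Int.cast_div_charZero (Nat.modEq_iff_dvd.1 (hab i))]
    push_cast
    rfl
  calc -(a * latticeWeight lam y) - -(b * latticeWeight lam y)
      = ∑ i, ((b : ℝ) - a) * (y i / lam i) := by rw [← mul_sum, ← latticeWeight]; ring
    _ = _ := by
      push_cast
      exact sum_congr rfl fun i _ ↦ by rw [hterm]; ring

theorem isIDP_rectSimplex_congr {lam lam' : Fin (n + 1) → ℕ} (hlam : ∀ i, 0 < lam i)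
    (hlam' : ∀ i, 0 < lam' i) {j : Fin (n + 1)} (hfacet : j.removeNth lam = j.removeNth lam')
    (hmod : ∀ i, lam j ≡ lam' j [MOD j.removeNth lam i]) {c : ℕ} (hc : 0 < c) :
    IsIDP c (rectSimplex lam) ↔ IsIDP c (rectSimplex lam') := by
  rw [isIDP_rectSimplex_iff_fract hlam hc j, isIDP_rectSimplex_iff_fract hlam' hc j, ← hfacet]
  simp only [fract_neg_mul_latticeWeight_congr hmod]

theorem munorm_rectSimplex_congr {lam lam' : Fin (n + 1) → ℕ} (hlam : ∀ i, 0 < lam i)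
    (hlam' : ∀ i, 0 < lam' i) {j : Fin (n + 1)} (hfacet : j.removeNth lam = j.removeNth lam')
    (hmod : ∀ i, lam j ≡ lam' j [MOD j.removeNth lam i]) :
    munorm (rectSimplex lam) = munorm (rectSimplex lam') := by
  have hnormal (k : ℕ) :
      IsNormal (dilate k (rectSimplex lam)) ↔ IsNormal (dilate k (rectSimplex lam')) := by
    rw [dilate_rectSimplex, dilate_rectSimplex]
    obtain rfl | hk := k.eq_zero_or_pos
    · simp only [zero_smul]
    · exact forall₂_congr fun c hc ↦ isIDP_rectSimplex_congr
        (fun i ↦ Nat.mul_pos hk (hlam i)) (fun i ↦ Nat.mul_pos hk (hlam' i))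
        (congrArg (k • ·) hfacet) (fun i ↦ (hmod i).mul_left' k) hc
  simp only [munorm, hnormal]

theorem infinite_setOf_munorm_rectSimplex_eq {lam : Fin (n + 1) → ℕ} (hlam : ∀ i, 0 < lam i) :
    {lam' : Fin (n + 1) → ℕ | (∀ i, 0 < lam' i) ∧
      munorm (rectSimplex lam') = munorm (rectSimplex lam)}.Infinite := by
  set period := ∏ i, Fin.removeNth 0 lam i
  have period_pos : 0 < period := prod_pos fun i _ ↦ hlam _
  refine Set.infinite_of_injective_forall_mem
    (f := fun m : ℕ ↦ Function.update lam 0 (lam 0 + m * period)) ?_ fun m ↦ ?_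
  · intro m m' h
    simpa [period_pos.ne'] using congrFun h 0
  · have hpos : ∀ i, 0 < Function.update lam 0 (lam 0 + m * period) i :=
      (Function.forall_update_iff lam fun _ a ↦ 0 < a).2
        ⟨Nat.add_pos_left (hlam 0) _, fun i _ ↦ hlam i⟩
    refine ⟨hpos, (munorm_rectSimplex_congr (j := 0) hlam hpos (by simp) fun i ↦ ?_).symm⟩
    have hdvd : Fin.removeNth 0 lam i ∣ m * period := (dvd_prod_of_mem _ (mem_univ i)).mul_left m
    rw [Function.update_self]
    simpa using (Nat.modEq_zero_iff_dvd.2 hdvd).symm.add_left (lam 0)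

theorem stmt_13_general (n : ℕ) (hn : 0 < n) (k₀ : ℕ) :
    (∃ lam : Fin n → ℕ, (∀ i, 0 < lam i) ∧ munorm (rectSimplex lam) = k₀) ↔
      {lam : Fin n → ℕ | (∀ i, 0 < lam i) ∧ munorm (rectSimplex lam) = k₀}.Infinite := by
  obtain ⟨n, rfl⟩ := Nat.exists_eq_add_one.2 hn
  refine ⟨?_, Set.Infinite.nonempty⟩
  rintro ⟨lam, hlam, rfl⟩
  exact infinite_setOf_munorm_rectSimplex_eq hlam

/-- There exists a maximally non-normal rectangular `n`-simplex
iff there exist infinitely many. -/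
theorem stmt_13 (n : ℕ) (hn : 0 < n) :
    (∃ lam : Fin n → ℕ, (∀ i, 0 < lam i) ∧ munorm (rectSimplex lam) = n - 1) ↔
      {lam : Fin n → ℕ |
        (∀ i, 0 < lam i) ∧ munorm (rectSimplex lam) = n - 1}.Infinite :=
  stmt_13_general n hn (n - 1)
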